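/- arXiv:math/0506443 — 3 statements merged into one kernel-verified Lean document; each statement's English description precedes it below -/
import Mathlib

section
/- The subgroup of SL(2,ℤ) generated by the matrices A = [[1,1],[0,1]] and B³ = [[1,0],[-3,1]] has finite index in SL(2,ℤ). -/
/-- The matrix `A = [[1,1],[0,1]]` as an element of `SL(2,ℤ)`. -/
def A : Matrix.SpecialLinearGroup (Fin 2) ℤ :=
  ⟨!![1, 1; 0, 1], by norm_num [Matrix.det_fin_two_of]⟩

/-- The matrix `B = [[1,0],[-1,1]]` as an element of `SL(2,ℤ)`. -/
def B : Matrix.SpecialLinearGroup (Fin 2) ℤ :=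
  ⟨!![1, 0; -1, 1], by norm_num [Matrix.det_fin_two_of]⟩

/-!
For `n = 3` and `n = 4` the group generated by `A` and `B ^ n` is the whole congruence subgroup
`Γ₁(n)`. Left multiplication by powers of `A` and `B ^ n` runs a Euclidean algorithm on the first
column `(a, c)` of a matrix in `Γ₁(n)`: reducing `a` modulo `c` gives `|a| ≤ |c| / 2`, and then
reducing `c` modulo `n * a` gives a new lower entry of absolute value at most
`n * |a| / 2 ≤ n * |c| / 4`. For `n ≤ 4` this makes `|c|` decrease until `c = 0` (for `n = 4` the
first inequality is strict by parity); the matrix is then a power of `A`, since `a ≡ 1` modulo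
`n ≥ 3` excludes `a = -1`.
-/

open CongruenceSubgroup
open scoped MatrixGroups

theorem exists_two_mul_abs_sub_mul_le (x : ℤ) {c : ℤ} (hc : c ≠ 0) :
    ∃ k : ℤ, 2 * |x - k * c| ≤ |c| := by
  refine ⟨round (x / c : ℚ), ?_⟩
  have hc' : (c : ℚ) ≠ 0 := mod_cast hc
  have hround : |(x / c : ℚ) - round (x / c : ℚ)| * |(c : ℚ)| ≤ 1 / 2 * |(c : ℚ)| :=
    mul_le_mul_of_nonneg_right (abs_sub_round _) (abs_nonneg _)
  rw [← abs_mul, sub_mul, div_mul_cancel₀ _ hc'] at hround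
  have : 2 * |(x : ℚ) - round (x / c : ℚ) * c| ≤ |(c : ℚ)| := by linarith
  exact_mod_cast this

theorem exists_abs_sub_mul_lt_of_modEq_one {n a c : ℤ} (hn₂ : 2 ≤ n) (hn₄ : n ≤ 4)
    (ha : a ≡ 1 [ZMOD n]) (hnc : n ∣ c) (hc : c ≠ 0) :
    ∃ k m : ℤ, |c - m * (n * (a - k * c))| < |c| := by
  obtain ⟨k, hk⟩ := exists_two_mul_abs_sub_mul_le a hc
  set a' := a - k * c
  have ha' : n ∣ 1 - a' := by
    have : 1 - a' = 1 - a + k * c := by ring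
    exact this ▸ dvd_add ha.dvd (hnc.mul_left k)
  have ha'_ne : a' ≠ 0 := by
    intro h
    rw [h, sub_zero] at ha'
    linarith [Int.le_of_dvd one_pos ha']
  obtain ⟨m, hm⟩ := exists_two_mul_abs_sub_mul_le c (mul_ne_zero (by omega : n ≠ 0) ha'_ne)
  refine ⟨k, m, ?_⟩
  rw [abs_mul, abs_of_nonneg (by omega : 0 ≤ n)] at hm
  obtain hn | rfl := hn₄.lt_or_eq
  · have : n * |a'| < 4 * |a'| := mul_lt_mul_of_pos_right hn (abs_pos.mpr ha'_ne)
    linarith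
  · -- `a'` is odd, so `2 * |a'|` is not divisible by `4`.
    have hk_ne : 2 * |a'| ≠ |c| := by grind
    linarith [lt_of_le_of_ne hk hk_ne]

theorem coe_A_zpow (k : ℤ) : (↑(A ^ k) : Matrix (Fin 2) (Fin 2) ℤ) = !![1, k; 0, 1] :=
  ModularGroup.coe_T_zpow k

theorem B_eq_conj_T : B = ModularGroup.S * ModularGroup.T * ModularGroup.S⁻¹ := by
  decide

theorem coe_B_zpow (k : ℤ) : (↑(B ^ k) : Matrix (Fin 2) (Fin 2) ℤ) = !![1, 0; -k, 1] := by
  rw [B_eq_conj_T, conj_zpow]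
  simp [ModularGroup.coe_T_zpow, ModularGroup.coe_S, Matrix.adjugate_fin_two]

theorem A_zpow_mul_apply_zero (k : ℤ) (g : SL(2, ℤ)) (j : Fin 2) :
    (A ^ k * g) 0 j = g 0 j + k * g 1 j := by
  simp [coe_A_zpow, Matrix.mul_apply]

theorem A_zpow_mul_apply_one (k : ℤ) (g : SL(2, ℤ)) : (A ^ k * g) 1 = g 1 :=
  ModularGroup.T_pow_mul_apply_one k g

theorem B_zpow_mul_apply_one (k : ℤ) (g : SL(2, ℤ)) (j : Fin 2) :
    (B ^ k * g) 1 j = g 1 j - k * g 0 j := by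
  simp [coe_B_zpow, Matrix.mul_apply, neg_add_eq_sub]

theorem apply_zero_zero_mul_apply_one_one_eq_one {g : SL(2, ℤ)} (hc : g 1 0 = 0) :
    g 0 0 * g 1 1 = 1 := by
  simpa [hc] using (Matrix.det_fin_two g.1).symm.trans g.2

theorem eq_A_zpow_of_first_col_eq {g : SL(2, ℤ)} (ha : g 0 0 = 1) (hc : g 1 0 = 0) :
    g = A ^ g 0 1 := by
  have hd : g 1 1 = 1 := by simpa [ha] using apply_zero_zero_mul_apply_one_one_eq_one hc
  ext i j
  rw [coe_A_zpow]
  fin_cases i <;> fin_cases j <;> simp [ha, hc, hd]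

theorem closure_A_B_pow_le_Gamma1 (n : ℕ) : Subgroup.closure {A, B ^ n} ≤ Gamma1 n := by
  rw [Subgroup.closure_le]
  rintro g (rfl | rfl)
  · exact (Gamma1_mem n A).mpr (by simp [A])
  · refine (Gamma1_mem n (B ^ n)).mpr ?_
    rw [← zpow_natCast, coe_B_zpow]
    simp

theorem exists_mem_closure_natAbs_mul_apply_one_zero_lt {n : ℕ} (hn₂ : 2 ≤ n) (hn₄ : n ≤ 4)
    {g : SL(2, ℤ)} (hg : g ∈ Gamma1 n) (hc : g 1 0 ≠ 0) :
    ∃ h ∈ Subgroup.closure {A, B ^ n}, ((h * g) 1 0).natAbs < (g 1 0).natAbs := by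
  obtain ⟨ha, -, hnc⟩ := (Gamma1_mem n g).mp hg
  have ha' : g 0 0 ≡ 1 [ZMOD n] := (ZMod.intCast_eq_intCast_iff _ _ n).mp (by simpa using ha)
  have hnc' : (n : ℤ) ∣ g 1 0 := (ZMod.intCast_zmod_eq_zero_iff_dvd _ n).mp hnc
  obtain ⟨k, m, hlt⟩ :=
    exists_abs_sub_mul_lt_of_modEq_one (mod_cast hn₂) (mod_cast hn₄) ha' hnc' hc
  refine ⟨(B ^ n) ^ m * A ^ (-k), mul_mem (zpow_mem (Subgroup.subset_closure (by simp)) m)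
    (zpow_mem (Subgroup.subset_closure (by simp)) (-k)), ?_⟩
  have hentry : ((B ^ n) ^ m * A ^ (-k) * g) 1 0 =
      g 1 0 - m * (n * (g 0 0 - k * g 1 0)) := by
    rw [mul_assoc, ← zpow_natCast, ← zpow_mul, B_zpow_mul_apply_one, A_zpow_mul_apply_zero,
      A_zpow_mul_apply_one]
    ring
  rw [hentry]
  zify
  exact hlt

theorem eq_A_zpow_of_mem_Gamma1 {n : ℕ} (hn : 3 ≤ n) {g : SL(2, ℤ)} (hg : g ∈ Gamma1 n)
    (hc : g 1 0 = 0) : g = A ^ g 0 1 := by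
  refine eq_A_zpow_of_first_col_eq ?_ hc
  have hdet : g 0 0 * g 1 1 = 1 := apply_zero_zero_mul_apply_one_one_eq_one hc
  refine (Int.eq_one_or_neg_one_of_mul_eq_one hdet).resolve_right fun ha ↦ ?_
  have hmod : ((-1 : ℤ) : ZMod n) = (1 : ℤ) := by simpa [ha] using ((Gamma1_mem n g).mp hg).1
  have hdvd : (n : ℤ) ∣ 2 := ((ZMod.intCast_eq_intCast_iff _ _ n).mp hmod).dvd
  linarith [Int.le_of_dvd two_pos hdvd]

theorem closure_A_B_pow_eq_Gamma1 {n : ℕ} (hn₃ : 3 ≤ n) (hn₄ : n ≤ 4) :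
    Subgroup.closure {A, B ^ n} = Gamma1 n := by
  refine le_antisymm (closure_A_B_pow_le_Gamma1 n) fun g hg ↦ ?_
  induction hN : (g 1 0).natAbs using Nat.strong_induction_on generalizing g with
  | _ N ih =>
    by_cases hc : g 1 0 = 0
    · rw [eq_A_zpow_of_mem_Gamma1 hn₃ hg hc]
      exact zpow_mem (Subgroup.subset_closure (by simp)) _
    · obtain ⟨h, hh, hlt⟩ :=
        exists_mem_closure_natAbs_mul_apply_one_zero_lt (by omega) hn₄ hg hc
      have hhg : h * g ∈ Gamma1 n := mul_mem (closure_A_B_pow_le_Gamma1 n hh) hg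
      exact (Subgroup.mul_mem_cancel_left _ hh).mp (ih _ (hN ▸ hlt) _ hhg rfl)

/-- The subgroup of `SL(2,ℤ)` generated by `A` and `B³` has finite index. -/
theorem subgroup_A_Bcubed_finiteIndex :
    (Subgroup.closure ({A, B ^ 3} : Set (Matrix.SpecialLinearGroup (Fin 2) ℤ))).FiniteIndex := by
  rw [closure_A_B_pow_eq_Gamma1 le_rfl (by norm_num)]
  infer_instance
end

section
/- There exists a group homomorphism φ from SL(2,ℤ) to the cyclic group ℤ/12ℤ such that φ(A) = 1 and φ(B) = 1, where A = [[1,1],[0,1]] and B = [[1,0],[-1,1]]. -/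
/-!
The square `f = η²` of the Dedekind eta function is a continuous, nowhere vanishing twelfth root of
the discriminant `Δ = η²⁴`. Since `Δ` is invariant of weight `12`, the function `f ∣[1] γ` is
another continuous twelfth root of `Δ`, so `f ∣[1] γ = χ γ • f` for a constant twelfth root of unity
`χ γ`, as `ℍ` is connected. Then `χ` is a character of `SL(2, ℤ)`, and
`η (τ + 1) = e^(2πi/24) η τ` shows that it sends `A`, the translation, to the primitive root
`e^(2πi/12)`. The matrix `B` is conjugate to `A`, so `χ` takes the same value there.
-/

open Complex ModularForm Multiplicative
open UpperHalfPlane hiding I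
open Function.Periodic (qParam)
open scoped MatrixGroups Real

theorem exists_rootsOfUnity_smul_eq_of_pow_eq {X 𝕜 : Type*} [TopologicalSpace X]
    [PreconnectedSpace X] [Field 𝕜] [TopologicalSpace 𝕜] [T1Space 𝕜] [ContinuousInv₀ 𝕜]
    [ContinuousMul 𝕜] {n : ℕ} [NeZero n] {f g : X → 𝕜} (hf : Continuous f) (hg : Continuous g)
    (hg₀ : ∀ x, g x ≠ 0) (hfg : f ^ n = g ^ n) : ∃ ζ : rootsOfUnity n 𝕜, f = ζ • g := by
  let roots : Set 𝕜 := Set.range fun ζ : rootsOfUnity n 𝕜 ↦ ((ζ : 𝕜ˣ) : 𝕜)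
  have hquot (x : X) : f x / g x ∈ roots := by
    have hpow : (f x / g x) ^ n = 1 := by
      rw [div_pow, div_eq_one_iff_eq (pow_ne_zero n (hg₀ x))]
      exact congrFun hfg x
    exact ⟨rootsOfUnity.mkOfPowEq _ hpow, rootsOfUnity.coe_mkOfPowEq hpow⟩
  obtain ⟨_, ⟨ζ, rfl⟩, hζ⟩ := isPreconnected_univ.eqOn_const_of_mapsTo
    (Set.finite_range _).isDiscrete (hf.div hg hg₀).continuousOn (fun x _ ↦ hquot x)
    (Set.range_nonempty _)
  exact ⟨ζ, funext fun x ↦ (div_eq_iff (hg₀ x)).1 (hζ (Set.mem_univ x))⟩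

theorem exists_mulEquiv_zmod_map_toRootsOfUnity {R : Type*} [CommRing R] [IsDomain R] {n : ℕ}
    [NeZero n] {ζ : R} (hζ : IsPrimitiveRoot ζ n) :
    ∃ e : rootsOfUnity n R ≃* Multiplicative (ZMod n), e hζ.toRootsOfUnity = ofAdd 1 := by
  have hunit : IsPrimitiveRoot (hζ.toRootsOfUnity : Rˣ) n := by
    rwa [← IsPrimitiveRoot.coe_units_iff]
  let e := hunit.zmodEquivZPowers.toMultiplicativeLeft.trans
    (MulEquiv.subgroupCongr hunit.zpowers_eq)
  have he : e (ofAdd 1) = hζ.toRootsOfUnity := by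
    have hone := hunit.zmodEquivZPowers_apply_coe_nat 1
    simp only [Nat.cast_one, pow_one] at hone
    exact congrArg (MulEquiv.subgroupCongr hunit.zpowers_eq) hone
  exact ⟨e.symm, e.symm_apply_eq.2 he.symm⟩

theorem continuous_slash {f : ℍ → ℂ} (hf : Continuous f) (k : ℤ) (g : GL (Fin 2) ℝ) :
    Continuous (f ∣[k] g) := by
  have hdenom := (mdifferentiable_denom_zpow g (-k)).continuous
  simp only [slash_def]
  fun_prop

theorem pow_slash_SL2 (f : ℍ → ℂ) (n : ℕ) (k : ℤ) (γ : SL(2, ℤ)) :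
    (f ^ n) ∣[n * k] γ = (f ∣[k] γ) ^ n := by
  ext τ
  simp only [Pi.pow_apply, SL_slash_apply]
  rw [mul_pow, ← mul_neg, mul_comm (n : ℤ), zpow_mul, zpow_natCast]

theorem rootsOfUnity_smul_left_injective {X R : Type*} [CommMonoidWithZero R]
    [IsRightCancelMulZero R] {n : ℕ} {f : X → R} {x : X} (hx : f x ≠ 0) :
    Function.Injective fun ζ : rootsOfUnity n R ↦ ζ • f := fun _ _ h ↦
  Subtype.ext <| Units.ext <| mul_right_cancel₀ hx <| congrFun h x

section Character

variable {f : ℍ → ℂ} {n : ℕ} [NeZero n] {k : ℤ}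

theorem exists_slash_eq_rootsOfUnity_smul (hf : Continuous f) (hf₀ : ∀ τ, f τ ≠ 0)
    {γ : SL(2, ℤ)} (hγ : (f ^ n) ∣[n * k] γ = f ^ n) :
    ∃ ζ : rootsOfUnity n ℂ, f ∣[k] γ = ζ • f :=
  exists_rootsOfUnity_smul_eq_of_pow_eq (continuous_slash hf k γ) hf hf₀
    ((pow_slash_SL2 f n k γ).symm.trans hγ)

theorem exists_character_slash_eq_smul (hf : Continuous f) (hf₀ : ∀ τ, f τ ≠ 0)
    (hinv : ∀ γ : SL(2, ℤ), (f ^ n) ∣[n * k] γ = f ^ n) :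
    ∃ χ : SL(2, ℤ) →* rootsOfUnity n ℂ, ∀ γ, f ∣[k] γ = χ γ • f := by
  choose χ hχ using fun γ ↦ exists_slash_eq_rootsOfUnity_smul hf hf₀ (hinv γ)
  refine ⟨MonoidHom.mk' χ fun γ δ ↦ rootsOfUnity_smul_left_injective (hf₀ UpperHalfPlane.I) ?_, hχ⟩
  calc χ (γ * δ) • f = (f ∣[k] γ) ∣[k] δ := by rw [← hχ, SlashAction.slash_mul]
    _ = χ γ • f ∣[k] δ := by rw [hχ γ, SL_smul_slash]
    _ = (χ γ * χ δ) • f := by rw [hχ δ, smul_smul]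

end Character

/-- The square `η²` of the Dedekind eta function as a function on the upper half-plane. It is the
twelfth root of the discriminant whose behaviour under the weight `1` slash action yields the
character of order `12`. -/
noncomputable def etaSq (τ : ℍ) : ℂ := η τ ^ 2

theorem continuous_etaSq : Continuous etaSq :=
  Continuous.pow (continuous_iff_continuousAt.2 fun τ ↦
    (differentiableAt_eta_of_mem_upperHalfPlaneSet τ.2).continuousAt.comp
      continuous_coe.continuousAt) 2

theorem etaSq_ne_zero (τ : ℍ) : etaSq τ ≠ 0 :=
  pow_ne_zero 2 (eta_ne_zero τ.2)

theorem etaSq_pow_twelve : etaSq ^ 12 = discriminant :=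
  funext fun τ ↦ (pow_mul (η τ) 2 12).symm

theorem etaSq_pow_twelve_slash (γ : SL(2, ℤ)) : (etaSq ^ 12) ∣[(12 : ℤ)] γ = etaSq ^ 12 := by
  rw [etaSq_pow_twelve]
  exact SlashInvariantForm.slash_action_generators_SL2Z discriminant_S_invariant
    discriminant_T_invariant γ

theorem qParam_add (h : ℝ) (z w : ℂ) : qParam h (z + w) = qParam h z * qParam h w := by
  rw [qParam, mul_add, add_div, Complex.exp_add]
  rfl

theorem eta_add_one (z : ℂ) : η (z + 1) = cexp (2 * π * I / 24) * η z := by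
  have hq : qParam 24 (z + 1) = cexp (2 * π * I / 24) * qParam 24 z := by
    rw [qParam_add, mul_comm]
    simp [qParam]
  have hprod (n : ℕ) : eta_q n (z + 1) = eta_q n z := by
    have hone : qParam 1 1 = 1 := by simp [qParam]
    rw [eta_q, qParam_add, hone, mul_one]
  simp only [ModularForm.eta, hq, hprod, mul_assoc]

theorem etaSq_slash_T : etaSq ∣[(1 : ℤ)] ModularGroup.T = cexp (2 * π * I / 12) • etaSq := by
  ext τ
  have hdenom : denom ModularGroup.T τ = 1 := by
    rw [ModularGroup.denom_apply]
    simp [ModularGroup.T]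
  have hT : ((ModularGroup.T • τ : ℍ) : ℂ) = τ + 1 := by
    simpa using ModularGroup.coe_T_zpow_smul_eq (z := τ) (n := 1)
  rw [SL_slash_apply, hdenom, one_zpow, mul_one, etaSq, hT, eta_add_one, mul_pow,
    ← Complex.exp_nat_mul, Pi.smul_apply, smul_eq_mul, etaSq]
  push_cast
  ring_nf

theorem A_eq_T : A = ModularGroup.T := rfl

theorem B_eq_S_mul_A_mul_S_inv : B = ModularGroup.S * A * ModularGroup.S⁻¹ := by
  rw [eq_mul_inv_iff_mul_eq]
  decide

/-- There is a homomorphism `SL(2,ℤ) → ℤ/12ℤ` sending both `A` and `B` to `1`. -/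
theorem exists_hom_to_zmod_twelve :
    ∃ φ : Matrix.SpecialLinearGroup (Fin 2) ℤ →* Multiplicative (ZMod 12),
      φ A = Multiplicative.ofAdd (1 : ZMod 12) ∧
      φ B = Multiplicative.ofAdd (1 : ZMod 12) := by
  obtain ⟨χ, hχ⟩ := exists_character_slash_eq_smul (n := 12) (k := 1) continuous_etaSq etaSq_ne_zero
    (by simpa using etaSq_pow_twelve_slash)
  have hζ : IsPrimitiveRoot (cexp (2 * π * I / 12)) 12 := by
    exact_mod_cast isPrimitiveRoot_exp 12 (by decide)
  obtain ⟨e, he⟩ := exists_mulEquiv_zmod_map_toRootsOfUnity hζ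
  have hχA : χ A = hζ.toRootsOfUnity := by
    rw [A_eq_T]
    exact rootsOfUnity_smul_left_injective (etaSq_ne_zero UpperHalfPlane.I)
      ((hχ _).symm.trans etaSq_slash_T)
  have hφA : (e.toMonoidHom.comp χ) A = ofAdd 1 := (congrArg e hχA).trans he
  refine ⟨e.toMonoidHom.comp χ, hφA, ?_⟩
  rw [B_eq_S_mul_A_mul_S_inv, map_mul, map_mul, map_inv, mul_inv_cancel_comm, hφA]
end

section
/- In SL(2,ℤ), with A = [[1,1],[0,1]] and B = [[1,0],[-1,1]], for every natural number n the trace of the matrix (A⁻¹B)¹² · B¹²ⁿ is strictly greater than 3. -/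
theorem coe_B_pow (m : ℕ) :
    ((B ^ m : Matrix.SpecialLinearGroup (Fin 2) ℤ) : Matrix (Fin 2) (Fin 2) ℤ) =
      !![1, 0; -(m : ℤ), 1] := by
  induction m with
  | zero => simp [Matrix.one_fin_two]
  | succ m ih =>
    rw [pow_succ, Matrix.SpecialLinearGroup.coe_mul, ih]
    simp [B, ← neg_add_rev, add_comm]

theorem coe_inv_A_mul_B :
    ((A⁻¹ * B : Matrix.SpecialLinearGroup (Fin 2) ℤ) : Matrix (Fin 2) (Fin 2) ℤ) =
      !![2, -1; -1, 1] := by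
  rw [Matrix.SpecialLinearGroup.coe_mul, Matrix.SpecialLinearGroup.coe_inv]
  simp [A, B, Matrix.adjugate_fin_two_of]

-- The last entry is `fib (2 * k - 1)`, written as a difference in `ℤ` because truncated subtraction
-- would make it `fib 0 = 0` instead of `1` at `k = 0`.
theorem coe_inv_A_mul_B_pow (k : ℕ) :
    (((A⁻¹ * B) ^ k : Matrix.SpecialLinearGroup (Fin 2) ℤ) : Matrix (Fin 2) (Fin 2) ℤ) =
      !![(Nat.fib (2 * k + 1) : ℤ), -(Nat.fib (2 * k) : ℤ);
        -(Nat.fib (2 * k) : ℤ), (Nat.fib (2 * k + 1) : ℤ) - Nat.fib (2 * k)] := by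
  induction k with
  | zero => simp [Matrix.one_fin_two]
  | succ k ih =>
    have fib_even : Nat.fib (2 * (k + 1)) = Nat.fib (2 * k) + Nat.fib (2 * k + 1) :=
      Nat.fib_add_two
    have fib_odd : Nat.fib (2 * (k + 1) + 1) = Nat.fib (2 * k + 1) + Nat.fib (2 * (k + 1)) :=
      Nat.fib_add_two
    rw [pow_succ, Matrix.SpecialLinearGroup.coe_mul, ih, coe_inv_A_mul_B, fib_odd, fib_even,
      Matrix.mul_fin_two]
    push_cast
    congr! 3 <;> ring_nf

theorem trace_inv_A_mul_B_pow_mul_B_pow (k m : ℕ) :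
    Matrix.trace (((A⁻¹ * B) ^ k * B ^ m :
      Matrix.SpecialLinearGroup (Fin 2) ℤ) : Matrix (Fin 2) (Fin 2) ℤ) =
      2 * Nat.fib (2 * k + 1) - Nat.fib (2 * k) + m * Nat.fib (2 * k) := by
  rw [Matrix.SpecialLinearGroup.coe_mul, coe_inv_A_mul_B_pow, coe_B_pow, Matrix.mul_fin_two,
    Matrix.trace_fin_two_of]
  ring

theorem trace_fn_gt_three_general {k : ℕ} (hk : 2 ≤ k) (m : ℕ) :
    3 < Matrix.trace (((A⁻¹ * B) ^ k * B ^ m :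
      Matrix.SpecialLinearGroup (Fin 2) ℤ) : Matrix (Fin 2) (Fin 2) ℤ) := by
  have fib_even_le : (Nat.fib (2 * k) : ℤ) ≤ Nat.fib (2 * k + 1) :=
    mod_cast Nat.fib_le_fib_succ
  have five_le_fib : (5 : ℤ) ≤ Nat.fib (2 * k + 1) :=
    mod_cast Nat.fib_mono (show 5 ≤ 2 * k + 1 by lia)
  have shear_nonneg : (0 : ℤ) ≤ m * Nat.fib (2 * k) := by positivity
  rw [trace_inv_A_mul_B_pow_mul_B_pow]
  linarith

/-- For every natural number `n`, the trace of `(A⁻¹B)¹² · B¹²ⁿ` is greater than 3. -/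
theorem trace_fn_gt_three (n : ℕ) :
    3 < Matrix.trace (((A⁻¹ * B) ^ 12 * B ^ (12 * n) :
      Matrix.SpecialLinearGroup (Fin 2) ℤ) : Matrix (Fin 2) (Fin 2) ℤ) :=
  trace_fn_gt_three_general (by norm_num) (12 * n)
end
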